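/- arXiv:2210.10939 — 5 statements merged into one kernel-verified Lean document; each statement's English description precedes it below -/
import Mathlib

section
/- Suppose Δ_{A[[t]]}(F) ≠ 0 and F_0(x) = ∏_ν (x − a_ν)^{n_ν} with the a_ν pairwise distinct. Fix ν and index the t-roots of F so that s_1,...,s_{n_ν} are exactly those with constant term a_ν. Then the limit of the generalized formal discriminant Δ(F, x − a_ν) evaluated at x = a_ν satisfies Δ(F, x − a_ν)(a_ν, t)_0 = [∏_{ν'≠ν} (a_ν − a_{ν'})^{n_{ν'}}]^{2n_ν − 2} · ∏_{1≤i<j≤n_ν} ((s_i − s_j)_0)². -/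
open Finset Polynomial

noncomputable section

/-- The limit of a Hahn (Puiseux) series as `t → 0`: the coefficient of the lowest
power of `t` occurring in it (its leading coefficient). -/
def lim0 {L : Type*} [Field L] (f : HahnSeries ℚ L) : L := f.coeff f.order

/-- `s` is a Puiseux series with nonnegative support and constant term `a`
(i.e. `s(0) = a`). -/
def HasConst {L : Type*} [Field L] (s : HahnSeries ℚ L) (a : L) : Prop :=
  s.coeff 0 = a ∧ ∀ q < (0 : ℚ), s.coeff q = 0

/-- The natural ring map `A[[t]] → L((t^ℚ))` induced by `φ : A →+* L`. -/
def Phi {A L : Type*} [CommRing A] [Field L] (φ : A →+* L) :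
    PowerSeries A →+* HahnSeries ℚ L :=
  (HahnSeries.ofPowerSeries ℚ L).comp (PowerSeries.map φ)

/-- The polynomial with power-series coefficients determined by a family
`F(x,t) = Σ_i p_i(x) t^i` of polynomials of degree at most `n'`. -/
def fam {A : Type*} [CommRing A] (n' : ℕ) (p : ℕ → Polynomial A) :
    Polynomial (PowerSeries A) :=
  ∑ j ∈ Finset.range (n' + 1), Polynomial.C (PowerSeries.mk fun i => (p i).coeff j) * X ^ j

/-- `∏_{q ≠ q'} (S q − S q')`, the product of the differences of all (ordered) pairs of
distinct `t`-roots.  For a monic family it equals `(-1)^(N(N-1)/2)` times the discriminant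
`Δ_{A[[t]]}(F) = ∏_{q<q'} (S q − S q')²`; in particular it is nonzero iff
`Δ_{A[[t]]}(F) ≠ 0`. -/
def rootsSep {L : Type*} [Field L] {ι : Type*} [Fintype ι] [DecidableEq ι]
    (S : ι → HahnSeries ℚ L) : HahnSeries ℚ L :=
  ∏ q ∈ Finset.univ.offDiag, (S q.1 - S q.2)

/-- `Δ(F, f_ν)(a ν ℓ, t)_0`: the limit of the generalized formal discriminant of the family
with respect to `f_ν = ∏_ℓ (x − a ν ℓ)`, evaluated at `x = a ν ℓ`.  Here the `t`-roots
approaching the roots of `f_ν` are grouped as `s ν · i` for `i` in `Fin (n ν)`; following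
Definition 2.3, `s'_i(x) = f_ν(x) − ∏_ℓ (x − s ν ℓ i)`, so that
`s'_i(x) − s'_j(x) = ∏_ℓ (x − s ν ℓ j) − ∏_ℓ (x − s ν ℓ i)`, and
`Δ(F,f_ν)(x,t) = [∏_{others} (x − s_ℓ)]^(2 n ν − 2) ∏_{i<j} (s'_i − s'_j)²`. -/
def gdlim {L : Type*} [Field L] {m : ℕ} (d n : Fin m → ℕ)
    (a : (ν : Fin m) → Fin (d ν) → L)
    (s : (ν : Fin m) → (ℓ : Fin (d ν)) → Fin (n ν) → HahnSeries ℚ L)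
    (ν : Fin m) (ℓ : Fin (d ν)) : L :=
  lim0 ((∏ ν' ∈ Finset.univ.erase ν, ∏ ℓ', ∏ i', (HahnSeries.C (a ν ℓ) - s ν' ℓ' i')) ^
      (2 * n ν - 2) *
    ∏ q ∈ Finset.univ.filter (fun q : Fin (n ν) × Fin (n ν) => q.1 < q.2),
      ((∏ ℓ', (HahnSeries.C (a ν ℓ) - s ν ℓ' q.2)) -
        ∏ ℓ', (HahnSeries.C (a ν ℓ) - s ν ℓ' q.1)) ^ 2)

/-- The discriminant `Δ(f) = ∏_{ℓ<ℓ'} (a ℓ − a ℓ')²` of a monic split polynomial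
`f = ∏_ℓ (x − a ℓ)`. -/
def discOf {L : Type*} [Field L] {d : ℕ} (a : Fin d → L) : L :=
  ∏ q ∈ Finset.univ.filter (fun q : Fin d × Fin d => q.1 < q.2), (a q.1 - a q.2) ^ 2

/-- The vertex `ver(F)` of the family (Definition 3.1), computed from the root data:
`ver(F) = ∏_{ν,ℓ} Δ(F,f_ν)(a_{νℓ},t)_0 · ∏_{ν<ν'} res(f_ν,f_{ν'})^(2(n_ν+n_{ν'}−n_ν n_{ν'}))`,
where `res(f_ν, f_{ν'}) = ∏_{ℓ,ℓ'} (a ν ℓ − a ν' ℓ')`. -/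
def ver {L : Type*} [Field L] {m : ℕ} (d n : Fin m → ℕ)
    (a : (ν : Fin m) → Fin (d ν) → L)
    (s : (ν : Fin m) → (ℓ : Fin (d ν)) → Fin (n ν) → HahnSeries ℚ L) : L :=
  (∏ ν, ∏ ℓ, gdlim d n a s ν ℓ) *
    ∏ ν, ∏ ν' ∈ Finset.Ioi ν,
      (∏ ℓ, ∏ ℓ', (a ν ℓ - a ν' ℓ')) ^
        (2 * ((n ν : ℤ) + (n ν' : ℤ) - (n ν : ℤ) * (n ν' : ℤ)))

theorem lim0_mul {L : Type*} [Field L] (f g : HahnSeries ℚ L) :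
    lim0 (f * g) = lim0 f * lim0 g := by
  unfold lim0
  rw [← HahnSeries.leadingCoeff_eq, ← HahnSeries.leadingCoeff_eq, ← HahnSeries.leadingCoeff_eq,
    HahnSeries.leadingCoeff_mul]

theorem lim0_one {L : Type*} [Field L] : lim0 (1 : HahnSeries ℚ L) = 1 := by
  unfold lim0
  rw [← HahnSeries.leadingCoeff_eq, HahnSeries.leadingCoeff_one]

/-- `lim0` as a monoid homomorphism. -/
def lim0Hom (L : Type*) [Field L] : HahnSeries ℚ L →* L where
  toFun := lim0
  map_one' := lim0_one
  map_mul' := lim0_mul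

theorem lim0_eq {L : Type*} [Field L] (f : HahnSeries ℚ L) : lim0 f = lim0Hom L f := rfl

theorem lim0_const {L : Type*} [Field L] {a b : L} (hab : a ≠ b) {s : HahnSeries ℚ L}
    (hs : HasConst s b) : lim0 (HahnSeries.C a - s) = a - b := by
  have h0 : (HahnSeries.C a - s).coeff 0 = a - b := by
    simp [hs.1]
  have hne : (HahnSeries.C a - s).coeff 0 ≠ 0 := by rw [h0]; exact sub_ne_zero.2 hab
  have hord : (HahnSeries.C a - s).order = 0 := by
    apply le_antisymm (HahnSeries.order_le_of_coeff_ne_zero hne)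
    by_contra hlt
    push Not at hlt
    have hz : HahnSeries.C a - s ≠ 0 := by
      intro h; rw [h] at hne; simp at hne
    have h1 := HahnSeries.coeff_order_eq_zero.not.2 hz
    apply h1
    generalize (HahnSeries.C a - s).order = o at hlt
    rw [HahnSeries.coeff_sub, hs.2 _ hlt, HahnSeries.C_apply,
      HahnSeries.coeff_single_of_ne hlt.ne, sub_zero]
  unfold lim0
  rw [hord, h0]

/-- **Lemma 2.4.**  Suppose `Δ_{A[[t]]}(F) ≠ 0` and `F_0 = ∏_ν (x − a_ν)^{n_ν}` with the
`a_ν` pairwise distinct; let `s ν 1, ..., s ν (n_ν)` be the `t`-roots of `F` with constant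
term `a_ν`.  Then for each `ν`,
`Δ(F, x − a_ν)(a_ν, t)_0 = [∏_{ν'≠ν} (a_ν − a_{ν'})^{n_{ν'}}]^(2n_ν−2) ·
∏_{i<j} ((s_i − s_j)_0)²`. -/
theorem stmt1 {A L : Type*} [CommRing A] [IsDomain A]
    [Field L] [IsAlgClosed L] [CharZero L]
    (φ : A →+* L) (hφ : Function.Injective φ)
    (n' : ℕ) (p : ℕ → Polynomial A) (hdeg : ∀ i, (p i).natDegree ≤ n')
    (m : ℕ) (nn : Fin m → ℕ) (hnn : ∀ ν, 0 < nn ν)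
    (hn' : n' = ∑ ν, nn ν)
    (a : Fin m → L) (ha : Function.Injective a)
    (hF0 : (p 0).map φ = ∏ ν, (X - C (a ν)) ^ nn ν)
    (s : (ν : Fin m) → Fin (nn ν) → HahnSeries ℚ L)
    (hs : ∀ ν i, HasConst (s ν i) (a ν))
    (hsplit : (fam n' p).map (Phi φ) = ∏ ν, ∏ i, (X - C (s ν i)))
    (hΔ : rootsSep (fun q : Σ ν : Fin m, Fin (nn ν) => s q.1 q.2) ≠ 0)
    (ν : Fin m) :
    lim0 ((∏ ν' ∈ Finset.univ.erase ν, ∏ i', (HahnSeries.C (a ν) - s ν' i')) ^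
        (2 * nn ν - 2) *
      ∏ q ∈ Finset.univ.filter (fun q : Fin (nn ν) × Fin (nn ν) => q.1 < q.2),
        (s ν q.1 - s ν q.2) ^ 2) =
      (∏ ν' ∈ Finset.univ.erase ν, (a ν - a ν') ^ nn ν') ^ (2 * nn ν - 2) *
        ∏ q ∈ Finset.univ.filter (fun q : Fin (nn ν) × Fin (nn ν) => q.1 < q.2),
          (lim0 (s ν q.1 - s ν q.2)) ^ 2 := by
  rw [lim0_eq, map_mul, map_pow, map_prod, map_prod]
  congr 1
  · congr 1
    apply Finset.prod_congr rfl
    intro ν' hν'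
    rw [map_prod]
    have h : ∀ i, lim0Hom L (HahnSeries.C (a ν) - s ν' i) = a ν - a ν' := fun i =>
      lim0_const (fun h => (Finset.ne_of_mem_erase hν') (ha h).symm) (hs ν' i)
    simp only [h, Finset.prod_const, Finset.card_univ, Fintype.card_fin]
  · apply Finset.prod_congr rfl
    intro q _
    rw [map_pow]
    rfl
end
end

section
/- Let F(x,t) = x² A_{n−2}(x) + B_n(x) t + O(t²) be a family of polynomials of the first kind, where A_{n−2}(0)·B_n(0) ≠ 0, A_{n−2} is square-free with A_{n−2}(x) = ∏_i (x − a_i) for pairwise distinct nonzero a_i, and Δ_{A[[t]]}(F) ≠ 0. Then the type of F with respect to the factor f = x of F_0 = x² A_{n−2}(x) is τ = 1; more precisely, the two t-roots of F with constant term 0 differ by a Puiseux series of order 1/2, so m = 1/2 and τ = ⌊2·(1/2)⌋ = 1. -/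
open Finset Polynomial

noncomputable section

lemma w_of_const {L : Type*} [Field L] {s : HahnSeries ℚ L} {a : L} (h : HasConst s a) :
    0 ≤ HahnSeries.addVal ℚ L s := by
  rw [HahnSeries.addVal_apply]
  by_contra hc
  push Not at hc
  have hs : s ≠ 0 := by rintro rfl; simp at hc
  rw [← HahnSeries.order_eq_orderTop_of_ne_zero hs] at hc
  have h1 : s.order < 0 := by exact_mod_cast hc
  exact HahnSeries.coeff_order_eq_zero.not.mpr hs (h.2 _ h1)

lemma w_of_const' {L : Type*} [Field L] {s : HahnSeries ℚ L} {a : L} (h : HasConst s a)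
    (ha : a ≠ 0) : HahnSeries.addVal ℚ L s = 0 := by
  refine le_antisymm ?_ (w_of_const h)
  rw [HahnSeries.addVal_apply]
  apply HahnSeries.orderTop_le_of_coeff_ne_zero
  rw [h.1]; exact ha

lemma phi_const {A L : Type*} [CommRing A] [Field L] (φ : A →+* L) (f : PowerSeries A) :
    HasConst (Phi φ f) (φ (PowerSeries.constantCoeff f)) := by
  constructor
  · have := HahnSeries.ofPowerSeries_apply_coeff (Γ := ℚ) (PowerSeries.map φ f) 0
    simpa [Phi] using this
  · intro q hq
    simp only [Phi, RingHom.comp_apply, HahnSeries.ofPowerSeries_apply]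
    apply HahnSeries.embDomain_of_notMem_range
    rintro ⟨n, rfl⟩
    simp at hq
    exact absurd hq (by simp)

lemma w_X {A L : Type*} [CommRing A] [Field L] (φ : A →+* L) :
    HahnSeries.addVal ℚ L (Phi φ PowerSeries.X) = 1 := by
  simp only [Phi, RingHom.comp_apply, PowerSeries.map_X, HahnSeries.ofPowerSeries_X,
    HahnSeries.addVal_apply]
  rw [HahnSeries.orderTop_single one_ne_zero]; rfl

lemma w_coeff {L : Type*} [Field L] {n : ℕ} (r : Fin n → HahnSeries ℚ L)
    (hr : ∀ i, 0 ≤ HahnSeries.addVal ℚ L (r i)) (s : Finset (Fin n)) (k : ℕ) :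
    0 ≤ HahnSeries.addVal ℚ L ((∏ i ∈ s, (X - C (r i))).coeff k) := by
  induction s using Finset.induction_on generalizing k with
  | empty => 
    rw [Finset.prod_empty, Polynomial.coeff_one]
    split_ifs <;> simp
  | insert a s ha ih =>
    rw [Finset.prod_insert ha, sub_mul, Polynomial.coeff_sub, Polynomial.coeff_C_mul]
    refine AddValuation.map_le_sub _ ?_ ?_
    · cases k with
      | zero => simp
      | succ k => rw [Polynomial.coeff_X_mul]; exact ih k
    · rw [AddValuation.map_mul]; exact add_nonneg (hr a) (ih k)

/-- **Proposition 4.3.**  For a family of the first kind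
`F(x,t) = x² A_{n−2}(x) + B_n(x) t + O(t²)` with `A_{n−2}(0) B_n(0) ≠ 0`, `A_{n−2}`
square-free with pairwise distinct nonzero roots, and `Δ_{A[[t]]}(F) ≠ 0`, the type of
`F` with respect to the factor `f = x` of `F_0` is `τ = 1`: the two `t`-roots `u, v`
of `F` with constant term `0` satisfy `ord(u − v) = 1/2`, so `m = 1/2` and
`τ = ⌊2 · (1/2)⌋ = 1`. -/
theorem stmt11 {A L : Type*} [CommRing A] [IsDomain A]
    [Field L] [IsAlgClosed L] [CharZero L]
    (φ : A →+* L) (hφ : Function.Injective φ)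
    (N : ℕ) (hN : 2 ≤ N)
    (Aq Bq : Polynomial A) (hAmonic : Aq.Monic) (hAdeg : Aq.natDegree = N - 2)
    (hBdeg : Bq.natDegree ≤ N) (hsqfree : Squarefree Aq)
    (hAB : Aq.eval 0 * Bq.eval 0 ≠ 0)
    (p : ℕ → Polynomial A) (hdeg : ∀ i, (p i).natDegree ≤ N)
    (hp0 : p 0 = X ^ 2 * Aq) (hp1 : p 1 = Bq)
    (aA : Fin (N - 2) → L) (haInj : Function.Injective aA) (haNe : ∀ i, aA i ≠ 0)
    (hAfac : Aq.map φ = ∏ i, (X - C (aA i)))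
    (u v : HahnSeries ℚ L) (hu : HasConst u 0) (hv : HasConst v 0)
    (r : Fin (N - 2) → HahnSeries ℚ L) (hr : ∀ i, HasConst (r i) (aA i))
    (c : HahnSeries ℚ L)
    (hsplit : (fam N p).map (Phi φ) =
      C c * ((X - C u) * (X - C v) * ∏ i, (X - C (r i))))
    (hΔ : rootsSep (Sum.elim ![u, v] r) ≠ 0) :
    (u - v).order = 1 / 2 ∧ ⌊(2 : ℚ) * (u - v).order⌋ = 1 := by
  set w := HahnSeries.addVal ℚ L with hw
  set R : Polynomial (HahnSeries ℚ L) := ∏ i, (X - C (r i)) with hR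
  have hα : ∀ j ≤ N, ((fam N p).map (Phi φ)).coeff j
      = Phi φ (PowerSeries.mk fun i => (p i).coeff j) := by
    intro j hj
    rw [Polynomial.coeff_map, fam, Polynomial.finsetSum_coeff]
    simp only [Polynomial.coeff_C_mul_X_pow]
    rw [Finset.sum_ite_eq, if_pos (by simpa using Nat.lt_succ_of_le hj)]
  have hA0 : Aq.coeff 0 ≠ 0 := by
    rw [Polynomial.coeff_zero_eq_eval_zero]; exact left_ne_zero_of_mul hAB
  have hB0 : Bq.coeff 0 ≠ 0 := by
    rw [Polynomial.coeff_zero_eq_eval_zero]; exact right_ne_zero_of_mul hAB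
  -- w c = 0
  have hRm : R.Monic := Polynomial.monic_prod_of_monic _ _ fun i _ => Polynomial.monic_X_sub_C _
  have hRd : R.natDegree = N - 2 := by
    rw [hR, Polynomial.natDegree_finsetProd_X_sub_C_eq_card]; simp
  have hc : w c = 0 := by
    have h1 := hα N le_rfl
    have hm : ((X - C u) * (X - C v) * R).Monic :=
      ((Polynomial.monic_X_sub_C _).mul (Polynomial.monic_X_sub_C _)).mul hRm
    have hd : ((X - C u) * (X - C v) * R).natDegree = N := by
      rw [((Polynomial.monic_X_sub_C _).mul (Polynomial.monic_X_sub_C _)).natDegree_mul hRm,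
        (Polynomial.monic_X_sub_C _).natDegree_mul (Polynomial.monic_X_sub_C _), hRd]
      simp only [Polynomial.natDegree_X_sub_C]; omega
    have h2 : ((X - C u) * (X - C v) * R).coeff N = 1 := by
      have := hm.coeff_natDegree
      rwa [hd] at this
    rw [hsplit, Polynomial.coeff_C_mul, h2, mul_one] at h1
    rw [h1]
    refine w_of_const' (phi_const φ _) ?_
    have : (p 0).coeff N = 1 := by
      have h3 := hAmonic.coeff_natDegree
      rw [hAdeg] at h3
      obtain ⟨M, rfl⟩ := Nat.exists_eq_add_of_le' hN
      rw [hp0, Polynomial.coeff_X_pow_mul]; simpa using h3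
    simp [this]
  have hR0 : w (R.coeff 0) = 0 := by
    have : R.coeff 0 = ∏ i, (- r i) := by
      rw [hR, Polynomial.coeff_zero_prod]; simp
    rw [this]
    have key : ∀ s : Finset (Fin (N - 2)), w (∏ i ∈ s, (- r i)) = 0 := by
      intro s
      induction s using Finset.induction_on with
      | empty => simp
      | insert a s ha ih =>
        rw [Finset.prod_insert ha, AddValuation.map_mul, ih, AddValuation.map_neg,
          w_of_const' (hr a) (haNe a), add_zero]
    exact key _
  have hR1 : 0 ≤ w (R.coeff 1) := w_coeff r (fun i => w_of_const (hr i)) _ 1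
  have hx : ∀ j, (p 0).coeff j = 0 → (PowerSeries.mk fun i => (p i).coeff j) =
      PowerSeries.X * PowerSeries.mk fun i => (p (i+1)).coeff j := by
    intro j hj
    ext n
    cases n with
    | zero => simp [hj]
    | succ n => simp [PowerSeries.coeff_succ_X_mul]
  have hx0 : (p 0).coeff 0 = 0 := by simp [hp0]
  have hx1 : (p 0).coeff 1 = 0 := by
    rw [hp0, Polynomial.coeff_X_pow_mul']; simp
  have e0 := hα 0 (by omega)
  have e1 := hα 1 (by omega)
  rw [hx 0 hx0, map_mul, hsplit, Polynomial.coeff_C_mul] at e0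
  rw [hx 1 hx1, map_mul, hsplit, Polynomial.coeff_C_mul] at e1
  have huv : w (u * v) = 1 := by
    have e : ((X - C u) * (X - C v) * R).coeff 0 = (u * v) * R.coeff 0 := by
      simp [Polynomial.mul_coeff_zero]
    have h := congrArg w e0
    rw [e, w.map_mul c, w.map_mul (u*v) (R.coeff 0), hc, hR0, w.map_mul (Phi φ _), w_X,
      w_of_const' (phi_const φ _) (by
        simpa [hp1] using (map_ne_zero_iff φ hφ).mpr hB0)] at h
    rwa [zero_add, add_zero, add_zero] at h
  have hsum : 1 ≤ w (u + v) := by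
    have e : ((X - C u) * (X - C v) * R).coeff 1
        = (u * v) * R.coeff 1 - (u + v) * R.coeff 0 := by
      have : (X - C u) * (X - C v) * R = C (u*v) * R - C (u+v) * (X * R) + X * (X * R) := by
        simp only [map_add, map_mul]; ring
      rw [this, Polynomial.coeff_add, Polynomial.coeff_sub, Polynomial.coeff_C_mul,
        Polynomial.coeff_C_mul, Polynomial.coeff_X_mul R 0, Polynomial.coeff_X_mul (X * R) 0,
        Polynomial.coeff_X_mul_zero, add_zero]
    have h := congrArg w e1
    rw [e, AddValuation.map_mul, hc, zero_add, AddValuation.map_mul, w_X] at h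
    have h1 : 1 ≤ w ((u * v) * R.coeff 1 - (u + v) * R.coeff 0) := by
      rw [h]; exact le_add_of_nonneg_right (w_of_const (phi_const φ _))
    have h2 : 1 ≤ w ((u * v) * R.coeff 1) := by
      rw [AddValuation.map_mul, huv]; exact le_add_of_nonneg_right hR1
    have h3 := AddValuation.map_le_sub w h2 h1
    rwa [sub_sub_cancel, AddValuation.map_mul, hR0, add_zero] at h3
  have h4 : w (4 * (u * v)) = 1 := by
    rw [AddValuation.map_mul, huv]
    have : w 4 = 0 := by
      have h : HasConst (4 : HahnSeries ℚ L) 4 := by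
        have : (4 : HahnSeries ℚ L) = HahnSeries.C 4 := (map_ofNat HahnSeries.C 4).symm
        rw [this]
        refine ⟨by simp, fun q hq => ?_⟩
        rw [HahnSeries.C_apply, HahnSeries.coeff_single_of_ne hq.ne]
      exact w_of_const' h (by norm_num)
    rw [this, zero_add]
  have h5 : w ((u - v) * (u - v)) = 1 := by
    have : (u - v) * (u - v) = (u + v) * (u + v) - 4 * (u * v) := by ring
    rw [this, AddValuation.map_sub_eq_of_lt_right, h4]
    rw [h4, AddValuation.map_mul]
    calc (1 : WithTop ℚ) < 1 + 1 := by
          exact_mod_cast (by norm_num : (1:ℚ) < 1 + 1)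
      _ ≤ _ := add_le_add hsum hsum
  have hne : u - v ≠ 0 := by
    intro h
    rw [h] at h5; simp at h5
  rw [AddValuation.map_mul, hw, HahnSeries.addVal_apply,
    ← HahnSeries.order_eq_orderTop_of_ne_zero hne] at h5
  have h6 : (u - v).order + (u - v).order = 1 := by exact_mod_cast h5
  have h7 : (u - v).order = 1 / 2 := by linarith
  refine ⟨h7, ?_⟩
  rw [h7]; norm_num
end
end

section
/- Let F(x,t) = x² A_{n−2}(x) + 2x B_{n−1}(x) t + C_n(x) t² + O(t³) be a family of polynomials of the second kind, where A_{n−2}(0)·(B_{n−1}(0)² − A_{n−2}(0)·C_n(0)) ≠ 0, A_{n−2} is square-free with pairwise distinct nonzero roots, and Δ_{A[[t]]}(F) ≠ 0. Then the type of F with respect to the factor f = x of F_0 = x² A_{n−2}(x) is τ = 2; more precisely, the two t-roots of F with constant term 0 differ by a Puiseux series of order 1, so m = 1 and τ = ⌊2·1⌋ = 2. -/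
open Finset Polynomial

noncomputable section

/-- `s` has no terms of order `< q`, and its coefficient at `q` is `a`. -/
def LdT {L : Type*} [Field L] (q : ℚ) (a : L) (s : HahnSeries ℚ L) : Prop :=
  (∀ x < q, s.coeff x = 0) ∧ s.coeff q = a

lemma LdT.mul {L : Type*} [Field L] {q q' : ℚ} {a a' : L} {s s' : HahnSeries ℚ L}
    (h : LdT q a s) (h' : LdT q' a' s') : LdT (q + q') (a * a') (s * s') := by
  obtain ⟨h1, h2⟩ := h
  obtain ⟨h1', h2'⟩ := h'
  constructor
  · intro x hx
    rw [HahnSeries.coeff_mul]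
    apply Finset.sum_eq_zero
    rintro ⟨i, j⟩ hij
    rw [Finset.mem_antidiagonal] at hij
    have e : i + j = x := hij.2.2
    by_cases hi : i < q
    · simp [h1 i hi]
    · have : j < q' := by linarith
      simp [h1' j this]
  · rw [HahnSeries.coeff_mul, Finset.sum_eq_single (q, q')]
    · simp [h2, h2']
    · rintro ⟨i, j⟩ hij hne
      rw [Finset.mem_antidiagonal] at hij
      have e : i + j = q + q' := hij.2.2
      rcases lt_trichotomy i q with hi | hi | hi
      · simp [h1 i hi]
      · subst hi
        have : j = q' := by linarith
        subst this
        exact absurd rfl hne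
      · have : j < q' := by linarith
        simp [h1' j this]
    · intro hn
      by_contra hc
      apply hn
      rw [Finset.mem_antidiagonal]
      refine ⟨?_, ?_, rfl⟩
      · intro h0
        exact hc (by rw [h0]; simp)
      · intro h0
        exact hc (by rw [h0]; simp)

lemma LdT.sub {L : Type*} [Field L] {q : ℚ} {a a' : L} {s s' : HahnSeries ℚ L}
    (h : LdT q a s) (h' : LdT q a' s') : LdT q (a - a') (s - s') := by
  refine ⟨fun x hx => ?_, ?_⟩
  · simp [h.1 x hx, h'.1 x hx]
  · simp [h.2, h'.2]

lemma LdT.order {L : Type*} [Field L] {q : ℚ} {a : L} {s : HahnSeries ℚ L}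
    (h : LdT q a s) (ha : a ≠ 0) : s ≠ 0 ∧ s.order = q := by
  have hc : s.coeff q ≠ 0 := by rw [h.2]; exact ha
  have hs : s ≠ 0 := HahnSeries.ne_zero_of_coeff_ne_zero hc
  exact ⟨hs, le_antisymm (HahnSeries.order_le_of_coeff_ne_zero hc)
    ((HahnSeries.le_order_iff_forall hs).2 h.1)⟩

lemma LdT.weak {L : Type*} [Field L] {q q' : ℚ} {a : L} {s : HahnSeries ℚ L}
    (h : LdT q a s) (hq : q' < q) : LdT q' 0 s :=
  ⟨fun x hx => h.1 x (hx.trans hq), h.1 _ hq⟩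

lemma LdT.one {L : Type*} [Field L] : LdT 0 (1 : L) (1 : HahnSeries ℚ L) := by
  refine ⟨fun x hx => ?_, ?_⟩
  · simp [HahnSeries.coeff_one, hx.ne]
  · simp

lemma LdT.zero {L : Type*} [Field L] {q : ℚ} : LdT q (0 : L) (0 : HahnSeries ℚ L) := by
  refine ⟨fun x hx => ?_, ?_⟩ <;> simp

lemma LdT.prod {L : Type*} [Field L] {ι : Type*} (S : Finset ι) {a : ι → L}
    {s : ι → HahnSeries ℚ L} (h : ∀ i, LdT 0 (a i) (s i)) :
    LdT 0 (∏ i ∈ S, a i) (∏ i ∈ S, s i) := by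
  classical
  induction S using Finset.induction_on with
  | empty => simpa using LdT.one
  | insert i S hi ih =>
    rw [Finset.prod_insert hi, Finset.prod_insert hi]
    simpa using (h i).mul ih

lemma LdT.ofPS {L : Type*} [Field L] (n : ℕ) (f : PowerSeries L)
    (h : ∀ m < n, PowerSeries.coeff m f = 0) :
    LdT (n : ℚ) (PowerSeries.coeff n f) (HahnSeries.ofPowerSeries ℚ L f) := by
  refine ⟨fun x hx => ?_, HahnSeries.ofPowerSeries_apply_coeff f n⟩
  by_cases hr : x ∈ Set.range (Nat.castOrderEmbedding (α := ℚ))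
  · obtain ⟨m, rfl⟩ := hr
    have : m < n := by simpa using hx
    exact (HahnSeries.ofPowerSeries_apply_coeff f m).trans (h m this)
  · rw [HahnSeries.ofPowerSeries_apply]
    exact HahnSeries.embDomain_of_notMem_range hr

lemma LdT.prodcoeff {L : Type*} [Field L] {ι : Type*} (S : Finset ι)
    {a : ι → L} {r : ι → HahnSeries ℚ L} (h : ∀ i, LdT 0 (a i) (r i)) :
    ∀ k, ∃ b, LdT 0 b ((∏ i ∈ S, (X - C (r i))).coeff k) := by
  classical
  induction S using Finset.induction_on with
  | empty =>
    intro k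
    rcases k with _ | k
    · exact ⟨1, by simpa using LdT.one⟩
    · exact ⟨0, by simpa [Polynomial.coeff_one] using LdT.zero⟩
  | insert i S hi ih =>
    intro k
    rw [Finset.prod_insert hi, sub_mul]
    obtain ⟨b, hb⟩ := ih k
    have h2 := (h i).mul hb
    rw [add_zero] at h2
    rcases k with _ | k
    · refine ⟨0 - a i * b, ?_⟩
      simpa using LdT.zero.sub h2
    · obtain ⟨b', hb'⟩ := ih k
      refine ⟨b' - a i * b, ?_⟩
      simpa using hb'.sub h2

lemma fam_coeff {A L : Type*} [CommRing A] [Field L] (φ : A →+* L) (N : ℕ)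
    (p : ℕ → Polynomial A) (j n : ℕ) (hj : j ≤ N) (h : ∀ m < n, (p m).coeff j = 0) :
    LdT (n : ℚ) (φ ((p n).coeff j)) (((fam N p).map (Phi φ)).coeff j) := by
  have e : (fam N p).coeff j = PowerSeries.mk fun i => (p i).coeff j := by
    unfold fam
    rw [Polynomial.finsetSum_coeff]
    simp only [Polynomial.coeff_C_mul_X_pow]
    rw [Finset.sum_ite_eq, if_pos (by simpa [Nat.lt_succ_iff] using hj)]
  rw [Polynomial.coeff_map, e]
  have := LdT.ofPS n (PowerSeries.map φ (PowerSeries.mk fun i => (p i).coeff j))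
    (fun m hm => by simp [h m hm])
  simpa [Phi] using this

/-- **Proposition 4.4.**  For a family of the second kind
`F(x,t) = x² A_{n−2}(x) + 2x B_{n−1}(x) t + C_n(x) t² + O(t³)` with
`A_{n−2}(0)(B_{n−1}(0)² − A_{n−2}(0) C_n(0)) ≠ 0`, `A_{n−2}` square-free with pairwise
distinct nonzero roots, and `Δ_{A[[t]]}(F) ≠ 0`, the type of `F` with respect to the
factor `f = x` of `F_0` is `τ = 2`: the two `t`-roots `u, v` of `F` with constant term
`0` satisfy `ord(u − v) = 1`, so `m = 1` and `τ = ⌊2 · 1⌋ = 2`. -/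
theorem stmt12 {A L : Type*} [CommRing A] [IsDomain A]
    [Field L] [IsAlgClosed L] [CharZero L]
    (φ : A →+* L) (hφ : Function.Injective φ)
    (N : ℕ) (hN : 2 ≤ N)
    (Aq Bq Cq : Polynomial A) (hAmonic : Aq.Monic) (hAdeg : Aq.natDegree = N - 2)
    (hBdeg : Bq.natDegree ≤ N - 1) (hCdeg : Cq.natDegree ≤ N) (hsqfree : Squarefree Aq)
    (hABC : Aq.eval 0 * (Bq.eval 0 ^ 2 - Aq.eval 0 * Cq.eval 0) ≠ 0)
    (p : ℕ → Polynomial A) (hdeg : ∀ i, (p i).natDegree ≤ N)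
    (hp0 : p 0 = X ^ 2 * Aq) (hp1 : p 1 = 2 * X * Bq) (hp2 : p 2 = Cq)
    (aA : Fin (N - 2) → L) (haInj : Function.Injective aA) (haNe : ∀ i, aA i ≠ 0)
    (hAfac : Aq.map φ = ∏ i, (X - C (aA i)))
    (u v : HahnSeries ℚ L) (hu : HasConst u 0) (hv : HasConst v 0)
    (r : Fin (N - 2) → HahnSeries ℚ L) (hr : ∀ i, HasConst (r i) (aA i))
    (c : HahnSeries ℚ L)
    (hsplit : (fam N p).map (Phi φ) =
      C c * ((X - C u) * (X - C v) * ∏ i, (X - C (r i))))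
    (hΔ : rootsSep (Sum.elim ![u, v] r) ≠ 0) :
    (u - v).order = 1 ∧ ⌊(2 : ℚ) * (u - v).order⌋ = 2 := by
  have hu' : LdT 0 0 u := ⟨hu.2, hu.1⟩
  have hr' : ∀ i, LdT 0 (aA i) (r i) := fun i => ⟨(hr i).2, (hr i).1⟩
  set Q : Polynomial (HahnSeries ℚ L) := ∏ i, (X - C (r i)) with hQ
  have hQm : Q.Monic := monic_prod_of_monic _ _ fun i _ => monic_X_sub_C _
  have hQd : Q.natDegree = N - 2 := by
    rw [hQ, Polynomial.natDegree_prod_of_monic _ _ fun i _ => monic_X_sub_C _]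
    simp
  -- the leading coefficient
  have hc : LdT 0 1 c := by
    have h := fam_coeff φ N p N 0 le_rfl (by simp)
    rw [hsplit, hp0] at h
    have hm : ((X - C u) * (X - C v) * Q).Monic :=
      ((monic_X_sub_C u).mul (monic_X_sub_C v)).mul hQm
    have hd : ((X - C u) * (X - C v) * Q).natDegree = N := by
      rw [((monic_X_sub_C u).mul (monic_X_sub_C v)).natDegree_mul hQm,
        (monic_X_sub_C u).natDegree_mul (monic_X_sub_C v), hQd]
      simp
      omega
    have e1 : ((X - C u) * (X - C v) * Q).coeff N = 1 := by
      have := hm.coeff_natDegree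
      rwa [hd] at this
    have e2 : (X ^ 2 * Aq).coeff N = 1 := by
      have := hAmonic.coeff_natDegree
      rw [hAdeg] at this
      obtain ⟨k, rfl⟩ := Nat.exists_eq_add_of_le hN
      rw [add_comm 2 k, Polynomial.coeff_X_pow_mul]
      simpa using this
    rw [Polynomial.coeff_C_mul, e1, e2] at h
    simpa using h
  -- coefficients of P
  set P : Polynomial (HahnSeries ℚ L) := C c * Q with hP
  set α := φ (Aq.eval 0) with hα
  set β := φ (Bq.eval 0) with hβ
  set γ := φ (Cq.eval 0) with hγ
  have hP0 : LdT 0 α (P.coeff 0) := by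
    have e : α = ∏ i, (0 - aA i) := by
      have h1 : (Aq.map φ).eval 0 = α := by
        rw [hα, ← Polynomial.coeff_zero_eq_eval_zero, Polynomial.coeff_map,
          Polynomial.coeff_zero_eq_eval_zero]
      rw [← h1, hAfac, Polynomial.eval_prod]
      simp
    have h2 : P.coeff 0 = c * ∏ i, (0 - r i) := by
      rw [hP, Polynomial.coeff_C_mul, Polynomial.coeff_zero_eq_eval_zero, hQ,
        Polynomial.eval_prod]
      simp
    rw [e, h2]
    simpa using hc.mul (LdT.prod Finset.univ fun i => LdT.zero.sub (hr' i))
  obtain ⟨b, hP1⟩ : ∃ b, LdT 0 b (P.coeff 1) := by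
    obtain ⟨b, hb⟩ := LdT.prodcoeff Finset.univ hr' 1
    refine ⟨1 * b, ?_⟩
    rw [hP, Polynomial.coeff_C_mul]
    simpa using hc.mul hb
  have hH : (fam N p).map (Phi φ) = X * (X * P) - C (u + v) * (X * P) + C (u * v) * P := by
    rw [hsplit, hP, C_add, C_mul]
    ring
  have H0 := fam_coeff φ N p 0 2 (by omega) (by
    intro m hm
    interval_cases m
    · simp [hp0, Polynomial.coeff_zero_eq_eval_zero]
    · simp [hp1, Polynomial.coeff_zero_eq_eval_zero])
  have H1 := fam_coeff φ N p 1 1 (by omega) (by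
    intro m hm
    interval_cases m
    rw [hp0, pow_two, mul_assoc, Polynomial.coeff_X_mul]
    simp)
  have e0 : ((fam N p).map (Phi φ)).coeff 0 = u * v * P.coeff 0 := by
    rw [hH]; simp
  have e1 : ((fam N p).map (Phi φ)).coeff 1 = u * v * P.coeff 1 - (u + v) * P.coeff 0 := by
    rw [hH]
    have y1 : (X * (X * P)).coeff 1 = 0 := 
      (Polynomial.coeff_X_mul (X * P) 0).trans (Polynomial.coeff_X_mul_zero P)
    have y2 : (X * P).coeff 1 = P.coeff 0 := Polynomial.coeff_X_mul P 0
    rw [Polynomial.coeff_add, Polynomial.coeff_sub, Polynomial.coeff_C_mul,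
      Polynomial.coeff_C_mul, y1, y2]
    ring
  have f0 : φ ((p 2).coeff 0) = γ := by
    rw [hp2, Polynomial.coeff_zero_eq_eval_zero]
  have f1 : φ ((p 1).coeff 1) = 2 * β := by
    have : (2 * X * Bq).coeff 1 = 2 * Bq.eval 0 := by
      rw [show (2 * X * Bq : Polynomial A) = X * (C 2 * Bq) by
        rw [show (C 2 : Polynomial A) = 2 from rfl]; ring, Polynomial.coeff_X_mul, Polynomial.coeff_C_mul,
        Polynomial.coeff_zero_eq_eval_zero]
    rw [hp1, this, map_mul, map_ofNat]
  rw [e0, f0] at H0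
  rw [e1, f1] at H1
  push_cast at H0 H1
  set p0 := P.coeff 0
  set p1 := P.coeff 1
  have K1 : LdT 1 (-(2 * β * α)) ((u + v) * p0 * p0) := by
    have x1 := H1.mul hP0
    have x2 : LdT (1 : ℚ) 0 (u * v * p0 * p1) := (H0.mul hP1).weak (by norm_num)
    rw [add_zero] at x1
    have := x2.sub x1
    convert this using 1
    · ring
    · ring
  have K2 : LdT 2 (γ * (α * (α * α))) (u * v * p0 * (p0 * (p0 * p0))) := by
    simpa using H0.mul (hP0.mul (hP0.mul hP0))
  have K3 : LdT 0 4 (HahnSeries.C (4 : L) : HahnSeries ℚ L) := by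
    refine ⟨fun x hx => ?_, ?_⟩
    · simp [HahnSeries.C_apply, HahnSeries.coeff_single_of_ne hx.ne]
    · simp [HahnSeries.C_apply]
  have K4 : LdT 2 (4 * α ^ 2 * (β ^ 2 - α * γ)) (((u - v) * (p0 * p0)) * ((u - v) * (p0 * p0))) := by
    have x1 := K1.mul K1
    have x2 := K3.mul K2
    rw [zero_add] at x2
    rw [show (1 : ℚ) + 1 = 2 by norm_num] at x1
    have := x1.sub x2
    have e4 : (HahnSeries.C (4 : L) : HahnSeries ℚ L) = 4 := map_ofNat _ 4
    rw [e4] at this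
    convert this using 1
    · ring
    · ring
  have hne : α * (β ^ 2 - α * γ) ≠ 0 := by
    have := (map_ne_zero_iff φ hφ).2 hABC
    simpa using this
  have hα0 : α ≠ 0 := left_ne_zero_of_mul hne
  have hd0 : β ^ 2 - α * γ ≠ 0 := right_ne_zero_of_mul hne
  obtain ⟨n1, o1⟩ := K4.order (mul_ne_zero (mul_ne_zero (by norm_num) (pow_ne_zero 2 hα0)) hd0)
  obtain ⟨n2, o2⟩ := hP0.order hα0
  have n3 : (u - v) * (p0 * p0) ≠ 0 := left_ne_zero_of_mul n1
  have n4 : u - v ≠ 0 := left_ne_zero_of_mul n3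
  have hord : (u - v).order = 1 := by
    rw [HahnSeries.order_mul n3 n3, HahnSeries.order_mul n4 (mul_ne_zero n2 n2),
      HahnSeries.order_mul n2 n2, o2] at o1
    linarith
  refine ⟨hord, ?_⟩
  rw [hord]
  norm_num
end
end

section
/- Let F(x,t) = a_0 x² + a_1 x³ + 2 b_0 x t + b_1 x² t + c_0 t² + c_1 x t² + d_1 t³ + O(t⁴) be a family of polynomials of the third kind, with b_0² − a_0 c_0 = 0, a_0·(−a_1 b_0³ + b_1 b_0² a_0 − c_1 b_0 a_0² + d_1 a_0³) ≠ 0 and Δ_{A[[t]]}(F) ≠ 0. Then the type of F with respect to the factor f = x of F_0 = x²(a_0 + a_1 x) is τ = 3; more precisely, the two t-roots of F with constant term 0 have the form s_{1,2} = α t + α_{1,2} t^{3/2} + ⋯ with α = −b_0/a_0 and α_1 ≠ α_2, so m = 3/2 and τ = ⌊2·(3/2)⌋ = 3. -/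
open Finset Polynomial

noncomputable section

lemma hs_nonneg_iff {L : Type*} [Field L] {f : HahnSeries ℚ L} (q : ℚ) :
    (q : WithTop ℚ) ≤ f.orderTop ↔ ∀ r < q, f.coeff r = 0 := by
  rw [HahnSeries.le_orderTop_iff_forall]
  simp

def hsR (L : Type*) [Field L] : Subring (HahnSeries ℚ L) where
  carrier := {f | 0 ≤ f.orderTop}
  mul_mem' := by
    intro a b ha hb
    simp only [Set.mem_ofPred_eq, HahnSeries.orderTop_mul] at *
    exact add_nonneg ha hb
  one_mem' := by simp
  add_mem' := by
    intro a b ha hb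
    refine le_trans ?_ (HahnSeries.min_orderTop_le_orderTop_add (x := a) (y := b))
    exact le_inf ha hb
  zero_mem' := by simp
  neg_mem' := by
    intro a ha
    simpa using ha

lemma mem_hsR {L : Type*} [Field L] {f : HahnSeries ℚ L} : f ∈ hsR L ↔ 0 ≤ f.orderTop := Iff.rfl

lemma hsC_mem {L : Type*} [Field L] (x : L) : HahnSeries.C x ∈ hsR L := by
  rw [mem_hsR]
  exact HahnSeries.orderTop_single_le

def hsT (L : Type*) [Field L] : HahnSeries ℚ L := HahnSeries.single 1 1

lemma hsT_ord (L : Type*) [Field L] : (hsT L).orderTop = ((1 : ℚ) : WithTop ℚ) :=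
  HahnSeries.orderTop_single one_ne_zero

lemma hsT_mem (L : Type*) [Field L] : hsT L ∈ hsR L := by
  rw [mem_hsR, hsT_ord]
  exact_mod_cast zero_le_one

lemma hsT_pow (L : Type*) [Field L] (n : ℕ) :
    (hsT L ^ n).orderTop = ((n : ℚ) : WithTop ℚ) := by
  induction n with
  | zero => simp
  | succ n ih =>
    rw [pow_succ, HahnSeries.orderTop_mul, ih, hsT_ord, ← WithTop.coe_add]
    simp

lemma hsT_pow_mul {L : Type*} [Field L] (n : ℕ) {g : HahnSeries ℚ L} (hg : g ∈ hsR L) :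
    ((n : ℚ) : WithTop ℚ) ≤ (hsT L ^ n * g).orderTop := by
  rw [HahnSeries.orderTop_mul, hsT_pow]
  exact le_add_of_nonneg_right hg

lemma hs_unit {L : Type*} [Field L] {f : HahnSeries ℚ L} (hf : f ∈ hsR L)
    (h0 : f.coeff 0 ≠ 0) : f.orderTop = 0 :=
  le_antisymm (HahnSeries.orderTop_le_of_coeff_ne_zero h0) hf

lemma hsT_coeff0 {L : Type*} [Field L] (n : ℕ) (hn : 0 < n) {g : HahnSeries ℚ L}
    (hg : g ∈ hsR L) : (hsT L ^ n * g).coeff 0 = 0 := by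
  apply (hs_nonneg_iff (n : ℚ)).1 (hsT_pow_mul n hg)
  exact_mod_cast hn

lemma Phi_mem {A L : Type*} [CommRing A] [Field L] (φ : A →+* L) (f : PowerSeries A) :
    Phi φ f ∈ hsR L := by
  rw [mem_hsR]
  refine (hs_nonneg_iff 0).2 fun r hr => ?_
  simp only [Phi, RingHom.comp_apply, HahnSeries.ofPowerSeries_apply]
  apply HahnSeries.embDomain_of_notMem_range
  rintro ⟨n, rfl⟩
  simp at hr
  exact absurd hr (not_lt.2 (Nat.cast_nonneg n))

lemma Phi_expand {A L : Type*} [CommRing A] [Field L] (φ : A →+* L) (f : ℕ → A) :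
    Phi φ (PowerSeries.mk f) = HahnSeries.C (φ (f 0)) + HahnSeries.C (φ (f 1)) * hsT L
      + HahnSeries.C (φ (f 2)) * hsT L ^ 2 + HahnSeries.C (φ (f 3)) * hsT L ^ 3
      + hsT L ^ 4 * Phi φ (PowerSeries.mk fun i => f (i + 4)) := by
  have hX : Phi φ PowerSeries.X = hsT L := by simp [Phi, hsT]
  have hC : ∀ a, Phi φ (PowerSeries.C a) = HahnSeries.C (φ a) := by intro a; simp [Phi]
  have key : ∀ g : ℕ → A, Phi φ (PowerSeries.mk g) =
      hsT L * Phi φ (PowerSeries.mk fun i => g (i + 1)) + HahnSeries.C (φ (g 0)) := by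
    intro g
    conv_lhs => rw [PowerSeries.eq_X_mul_shift_add_const (PowerSeries.mk g)]
    simp [hX, hC]
  rw [key f, key fun i => f (i + 1), key fun i => f (i + 1 + 1), key fun i => f (i + 1 + 1 + 1)]
  ring

set_option maxHeartbeats 2000000 in
/-- **Proposition 4.5.**  For a family of the third kind
`F(x,t) = a₀x² + a₁x³ + 2b₀xt + b₁x²t + c₀t² + c₁xt² + d₁t³ + O(t⁴)` with
`b₀² − a₀c₀ = 0`, `a₀(−a₁b₀³ + b₁b₀²a₀ − c₁b₀a₀² + d₁a₀³) ≠ 0` and `Δ_{A[[t]]}(F) ≠ 0`,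
the type of `F` with respect to the factor `f = x` of `F_0 = x²(a₀ + a₁x)` is `τ = 3`:
the two `t`-roots `u, v` of `F` with constant term `0` have the form
`αt + α_{1,2}t^{3/2} + ⋯` with `α = −b₀/a₀` and `α₁ ≠ α₂`, so `ord(u − v) = 3/2`,
`m = 3/2` and `τ = ⌊2 · (3/2)⌋ = 3`. -/
theorem stmt13 {A L : Type*} [CommRing A] [IsDomain A]
    [Field L] [IsAlgClosed L] [CharZero L]
    (φ : A →+* L) (hφ : Function.Injective φ)
    (a0 a1 b0 b1 c0 c1 d1 : A)
    (hb : b0 ^ 2 - a0 * c0 = 0)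
    (hnz : a0 * (-a1 * b0 ^ 3 + b1 * b0 ^ 2 * a0 - c1 * b0 * a0 ^ 2 + d1 * a0 ^ 3) ≠ 0)
    (p : ℕ → Polynomial A) (hdeg : ∀ i, (p i).natDegree ≤ 3)
    (hp0 : p 0 = C a0 * X ^ 2 + C a1 * X ^ 3)
    (hp1 : p 1 = 2 * C b0 * X + C b1 * X ^ 2)
    (hp2 : p 2 = C c0 + C c1 * X)
    (hp3 : p 3 = C d1)
    (e : L) (he : φ a1 * e + φ a0 = 0)
    (u v w : HahnSeries ℚ L) (hu : HasConst u 0) (hv : HasConst v 0)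
    (hw : HasConst w e)
    (c : HahnSeries ℚ L)
    (hsplit : (fam 3 p).map (Phi φ) =
      C c * ((X - C u) * (X - C v) * (X - C w)))
    (hΔ : rootsSep ![u, v, w] ≠ 0) :
    u.coeff 1 = -φ b0 / φ a0 ∧ v.coeff 1 = -φ b0 / φ a0 ∧
      (u - v).order = 3 / 2 ∧ ⌊(2 : ℚ) * (u - v).order⌋ = 3 := by
  classical
  have ha0 : a0 ≠ 0 := left_ne_zero_of_mul hnz
  have hκ0 := right_ne_zero_of_mul hnz
  have hA0 : φ a0 ≠ 0 := (map_ne_zero_iff φ hφ).2 ha0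
  have hA1 : φ a1 ≠ 0 := by
    intro h; rw [h] at he; simp at he; exact hA0 he
  have he0 : e ≠ 0 := by
    intro h; rw [h] at he; simp at he; exact hA0 he
  obtain ⟨α, hα⟩ : ∃ α : L, α = -φ b0 / φ a0 := ⟨_, rfl⟩
  have hα1 : φ a0 * α + φ b0 = 0 := by rw [hα]; field_simp; ring
  have hbφ : φ b0 ^ 2 - φ a0 * φ c0 = 0 := by
    have := congrArg φ hb; simpa using this
  have hα2 : φ b0 * α + φ c0 = 0 := by
    apply mul_left_cancel₀ hA0
    linear_combination φ b0 * hα1 - hbφ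
  obtain ⟨κ, hκ⟩ : ∃ κ : L, κ = φ a1 * α ^ 3 + φ b1 * α ^ 2 + φ c1 * α + φ d1 := ⟨_, rfl⟩
  have hκne : κ ≠ 0 := by
    intro h
    apply hκ0
    apply hφ
    have hb' : φ b0 = - (φ a0 * α) := by linear_combination hα1
    simp only [map_add, map_sub, map_mul, map_pow, map_neg, map_zero]
    rw [hb']
    rw [h] at hκ
    linear_combination -(φ a0) ^ 3 * hκ
  -- coefficients
  have hcoef : ∀ j < 4, ((fam 3 p).map (Phi φ)).coeff j =
      Phi φ (PowerSeries.mk fun i => (p i).coeff j) := by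
    intro j hj
    rw [Polynomial.coeff_map]
    congr 1
    interval_cases j <;> simp [fam, Finset.sum_range_succ, Polynomial.coeff_X, Polynomial.coeff_C]
  have hexp : C c * ((X - C u) * (X - C v) * (X - C w)) =
      C c * X ^ 3 + C (-c * (u + v + w)) * X ^ 2 + C (c * (u * v + u * w + v * w)) * X
        + C (-c * u * v * w) := by
    simp only [map_mul, map_add, map_neg]
    ring
  rw [hsplit, hexp] at hcoef
  obtain ⟨q2, hq2⟩ : ∃ q, q = -c * (u + v + w) := ⟨_, rfl⟩
  obtain ⟨q1, hq1⟩ : ∃ q, q = c * (u * v + u * w + v * w) := ⟨_, rfl⟩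
  obtain ⟨q0, hq0⟩ : ∃ q, q = -c * u * v * w := ⟨_, rfl⟩
  rw [← hq2, ← hq1, ← hq0] at hcoef
  have g3 := hcoef 3 (by norm_num)
  have g2 := hcoef 2 (by norm_num)
  have g1 := hcoef 1 (by norm_num)
  have g0 := hcoef 0 (by norm_num)
  rw [Phi_expand, hp0, hp1, hp2, hp3] at g3 g2 g1 g0
  have h2C : (2 : Polynomial A) = C 2 := rfl
  have m3 := Phi_mem φ (PowerSeries.mk fun i => (p (i + 4)).coeff 3)
  have m2 := Phi_mem φ (PowerSeries.mk fun i => (p (i + 4)).coeff 2)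
  have m1 := Phi_mem φ (PowerSeries.mk fun i => (p (i + 4)).coeff 1)
  have m0 := Phi_mem φ (PowerSeries.mk fun i => (p (i + 4)).coeff 0)
  generalize Phi φ (PowerSeries.mk fun i => (p (i + 4)).coeff 3) = r3 at *
  generalize Phi φ (PowerSeries.mk fun i => (p (i + 4)).coeff 2) = r2 at *
  generalize Phi φ (PowerSeries.mk fun i => (p (i + 4)).coeff 1) = r1 at *
  generalize Phi φ (PowerSeries.mk fun i => (p (i + 4)).coeff 0) = r0 at *
  have e3 : c = HahnSeries.C (φ a1) + hsT L ^ 4 * r3 := by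
    simpa [h2C, mul_assoc, Polynomial.coeff_X, Polynomial.coeff_C] using g3
  have e2 : -c * (u + v + w) = HahnSeries.C (φ a0) + HahnSeries.C (φ b1) * hsT L
      + hsT L ^ 4 * r2 := by
    rw [← hq2]
    simpa [h2C, mul_assoc, Polynomial.coeff_X, Polynomial.coeff_C] using g2
  have e1 : c * (u * v + u * w + v * w) = 2 * HahnSeries.C (φ b0) * hsT L
      + HahnSeries.C (φ c1) * hsT L ^ 2 + hsT L ^ 4 * r1 := by
    rw [← hq1]
    have h2 : (2 : HahnSeries ℚ L) * HahnSeries.C (φ b0) = HahnSeries.C (φ (2 * b0)) := by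
      rw [map_mul, map_mul, map_ofNat, map_ofNat]
    rw [h2]
    simpa [h2C, mul_assoc, Polynomial.coeff_X, Polynomial.coeff_C] using g1
  have e0 : -c * u * v * w = HahnSeries.C (φ c0) * hsT L ^ 2
      + HahnSeries.C (φ d1) * hsT L ^ 3 + hsT L ^ 4 * r0 := by
    rw [← hq0]
    simpa [h2C, mul_assoc, Polynomial.coeff_X, Polynomial.coeff_C] using g0
  clear g3 g2 g1 g0 hcoef hexp hsplit
  have cord : c.orderTop = 0 := by
    apply hs_unit
    · rw [e3]
      exact add_mem (hsC_mem _) (mul_mem (pow_mem (hsT_mem L) _) m3)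
    · rw [e3, HahnSeries.coeff_add, hsT_coeff0 4 (by norm_num) m3]
      simpa using hA1
  have hwm : w ∈ hsR L := (hs_nonneg_iff 0).2 hw.2
  have tm := hsT_mem L
  have am := hsC_mem α
  have dord : (HahnSeries.C α * hsT L - w).orderTop = 0 := by
    apply hs_unit (sub_mem (mul_mem am tm) hwm)
    have := hsT_coeff0 1 (by norm_num) am
    rw [pow_one, mul_comm] at this
    rw [HahnSeries.coeff_sub, this, hw.1]
    simpa using he0
  -- transfer identities to Hahn series
  have Hα1 : HahnSeries.C (φ a0) * HahnSeries.C α + HahnSeries.C (φ b0)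
      = (0 : HahnSeries ℚ L) := by
    have := congrArg (HahnSeries.C (Γ := ℚ)) hα1
    simpa only [map_add, map_mul, map_zero] using this
  have Hα2 : HahnSeries.C (φ b0) * HahnSeries.C α + HahnSeries.C (φ c0)
      = (0 : HahnSeries ℚ L) := by
    have := congrArg (HahnSeries.C (Γ := ℚ)) hα2
    simpa only [map_add, map_mul, map_zero] using this
  have Hκ : HahnSeries.C κ = HahnSeries.C (φ a1) * HahnSeries.C α ^ 3
      + HahnSeries.C (φ b1) * HahnSeries.C α ^ 2 + HahnSeries.C (φ c1) * HahnSeries.C α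
      + (HahnSeries.C (φ d1) : HahnSeries ℚ L) := by
    have := congrArg (HahnSeries.C (Γ := ℚ)) hκ
    simpa only [map_add, map_mul, map_pow] using this
  have ma1 := hsC_mem (φ a1)
  have mb1 := hsC_mem (φ b1)
  have mc1 := hsC_mem (φ c1)
  have hTα : (HahnSeries.C α * hsT L).coeff 1 = α := by
    simp [hsT, HahnSeries.C_apply]
  obtain ⟨T, hT⟩ : ∃ T, T = hsT L := ⟨_, rfl⟩
  obtain ⟨a, ha⟩ : ∃ a : HahnSeries ℚ L, a = HahnSeries.C α := ⟨_, rfl⟩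
  rw [← hT] at e3 e2 e1 e0 tm
  rw [← hT, ← ha] at dord hTα
  rw [← ha] at Hα1 Hα2 Hκ am
  obtain ⟨u', hu'⟩ : ∃ u', u' = u - a * T := ⟨_, rfl⟩
  obtain ⟨v', hv'⟩ : ∃ v', v' = v - a * T := ⟨_, rfl⟩
  have k1 : c * (u' * v') * (a * T - w) = T ^ 3 * HahnSeries.C κ
      + T ^ 4 * (r3 * a ^ 3 * T ^ 3 + r2 * a ^ 2 * T ^ 2 + r1 * a * T + r0) := by
    rw [hu', hv', Hκ]
    linear_combination a ^ 3 * T ^ 3 * e3 + a ^ 2 * T ^ 2 * e2 + a * T * e1 + e0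
      + T ^ 2 * (a * Hα1 + Hα2)
  have k2 : c * (u' * v' - (a * T - w) * (u' + v')) = T ^ 2 *
      (3 * a ^ 2 * (HahnSeries.C (φ a1) + T ^ 4 * r3)
        + 2 * a * (HahnSeries.C (φ b1) + T ^ 3 * r2) + HahnSeries.C (φ c1) + T ^ 2 * r1) := by
    rw [hu', hv']
    linear_combination 3 * a ^ 2 * T ^ 2 * e3 + 2 * a * T * e2 + e1 + 2 * T * Hα1
  have n3 : (3 : HahnSeries ℚ L) ∈ hsR L := ofNat_mem _ 3
  have n2 : (2 : HahnSeries ℚ L) ∈ hsR L := ofNat_mem _ 2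
  have o1 : (c * (u' * v') * (a * T - w)).orderTop = ((3 : ℚ) : WithTop ℚ) := by
    have hA : (T ^ 3 * HahnSeries.C κ).orderTop = ((3 : ℚ) : WithTop ℚ) := by
      have : (HahnSeries.C κ : HahnSeries ℚ L).orderTop = 0 :=
        HahnSeries.orderTop_single hκne
      rw [HahnSeries.orderTop_mul, this, hT, hsT_pow]
      simp
    have hB : r3 * a ^ 3 * T ^ 3 + r2 * a ^ 2 * T ^ 2 + r1 * a * T + r0 ∈ hsR L := by
      have h2 := pow_mem am 2
      have h3 := pow_mem am 3
      have h4 := pow_mem tm 2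
      have h5 := pow_mem tm 3
      exact add_mem (add_mem (add_mem (mul_mem (mul_mem m3 h3) h5) (mul_mem (mul_mem m2 h2) h4))
        (mul_mem (mul_mem m1 am) tm)) m0
    rw [k1, HahnSeries.orderTop_add_eq_left, hA]
    rw [hA]
    have hC := hsT_pow_mul 4 hB
    rw [← hT] at hC
    refine lt_of_lt_of_le ?_ hC
    exact WithTop.coe_lt_coe.2 (by norm_num)
  have o1' : (u' * v').orderTop = ((3 : ℚ) : WithTop ℚ) := by
    rw [HahnSeries.orderTop_mul, HahnSeries.orderTop_mul, cord, dord] at o1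
    simpa using o1
  have o2 : ((2 : ℚ) : WithTop ℚ) ≤ (u' * v' - (a * T - w) * (u' + v')).orderTop := by
    have hB : 3 * a ^ 2 * (HahnSeries.C (φ a1) + T ^ 4 * r3)
        + 2 * a * (HahnSeries.C (φ b1) + T ^ 3 * r2) + HahnSeries.C (φ c1) + T ^ 2 * r1
        ∈ hsR L := by
      have h2 := pow_mem am 2
      have h4 := pow_mem tm 2
      have h5 := pow_mem tm 3
      have h6 := pow_mem tm 4
      exact add_mem (add_mem (add_mem (mul_mem (mul_mem n3 h2) (add_mem ma1 (mul_mem h6 m3)))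
        (mul_mem (mul_mem n2 am) (add_mem mb1 (mul_mem h5 m2)))) mc1) (mul_mem h4 m1)
    have h := hsT_pow_mul 2 hB
    rw [← hT, ← k2, HahnSeries.orderTop_mul, cord, zero_add] at h
    exact_mod_cast h
  have o3 : ((2 : ℚ) : WithTop ℚ) ≤ (u' + v').orderTop := by
    have h : ((2 : ℚ) : WithTop ℚ) ≤ ((a * T - w) * (u' + v')).orderTop := by
      have h1 : (a * T - w) * (u' + v')
          = u' * v' - (u' * v' - (a * T - w) * (u' + v')) := by ring
      rw [h1]
      refine le_trans (le_inf ?_ o2) HahnSeries.min_orderTop_le_orderTop_sub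
      rw [o1']
      exact WithTop.coe_le_coe.2 (by norm_num)
    rwa [HahnSeries.orderTop_mul, dord, zero_add] at h
  have o4 : ((u - v) * (u - v)).orderTop = ((3 : ℚ) : WithTop ℚ) := by
    have h4 : (HahnSeries.C (-4 : L) : HahnSeries ℚ L).orderTop = 0 :=
      HahnSeries.orderTop_single (by norm_num)
    have h4' : (HahnSeries.C (-4 : L) : HahnSeries ℚ L) = -4 := by
      rw [map_neg]; congr 1
    have h1 : (u - v) * (u - v) = HahnSeries.C (-4 : L) * (u' * v')
        + (u' + v') * (u' + v') := by
      rw [h4', hu', hv']; ring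
    have hA : (HahnSeries.C (-4 : L) * (u' * v')).orderTop = ((3 : ℚ) : WithTop ℚ) := by
      rw [HahnSeries.orderTop_mul, h4, o1', zero_add]
    rw [h1, HahnSeries.orderTop_add_eq_left, hA]
    rw [hA, HahnSeries.orderTop_mul]
    refine lt_of_lt_of_le ?_ (add_le_add o3 o3)
    rw [← WithTop.coe_add]
    exact WithTop.coe_lt_coe.2 (by norm_num)
  have huv : u - v ≠ 0 := by
    intro h
    rw [h] at o4
    simp at o4
  have o5 : (u - v).order = 3 / 2 := by
    rw [HahnSeries.orderTop_mul, ← HahnSeries.order_eq_orderTop_of_ne_zero huv,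
      ← WithTop.coe_add, WithTop.coe_eq_coe] at o4
    linarith
  have hc1 : (u - v).coeff 1 = 0 := HahnSeries.coeff_eq_zero_of_lt_order (by rw [o5]; norm_num)
  have hc2 : (u' + v').coeff 1 = 0 := (hs_nonneg_iff 2).1 o3 1 (by norm_num)
  rw [hu', hv'] at hc2
  simp only [HahnSeries.coeff_add, HahnSeries.coeff_sub, hTα] at hc1 hc2
  have hcu : u.coeff 1 = α := by
    have h : (2 : L) * (u.coeff 1 - α) = 0 := by linear_combination hc1 + hc2
    have := (mul_eq_zero.1 h).resolve_left two_ne_zero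
    linear_combination this
  refine ⟨by rw [hcu, hα], ?_, o5, ?_⟩
  · rw [← hα]; linear_combination hcu - hc1
  · rw [o5]; norm_num
end
end

section
/- Let A = k[y] and let F(x,t) = x²y + x C_1(x) t + F_2(x) t² + O(t³) be a family of polynomials with C_1, F_2 ∈ A[x] such that x does not divide C_1² − 4F_2·y, and Δ_{A[[t]]}(F) ≠ 0. Then the general type of F is τ = 2. -/
open Finset Polynomial

noncomputable section

theorem order_ofPS {L : Type*} [Field L] (g : PowerSeries L)
    (hg : PowerSeries.constantCoeff g ≠ 0) :
    (HahnSeries.ofPowerSeries ℚ L g).order = 0 := by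
  have hc : (HahnSeries.ofPowerSeries ℚ L g).coeff 0 ≠ 0 := by
    have := HahnSeries.ofPowerSeries_apply_coeff (Γ := ℚ) g 0
    simp only [Nat.cast_zero] at this
    rw [this]
    simpa using hg
  refine le_antisymm (HahnSeries.order_le_of_coeff_ne_zero hc) ?_
  have hne : HahnSeries.ofPowerSeries ℚ L g ≠ 0 := by
    intro h0
    rw [h0] at hc
    simp at hc
  rw [HahnSeries.le_order_iff_forall hne]
  intro q hq
  rw [HahnSeries.ofPowerSeries_apply]
  apply HahnSeries.embDomain_of_notMem_range
  rintro ⟨n, hn⟩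
  have : (n : ℚ) = q := hn
  have h2 : (0 : ℚ) ≤ n := Nat.cast_nonneg n
  linarith

/-- **Example 4.9 (e).**  Let `A = k[y]` and
`F(x,t) = x²y + x C₁(x) t + F₂(x) t² + O(t³)` with `x ∤ (C₁² − 4F₂y)` and
`Δ_{A[[t]]}(F) ≠ 0`.  Then the general type of `F` is `τ = 2`:
here `F_0 = y·x²`, so the repeated factor is `f = x` with multiplicity `2`, whose two
`t`-roots are `u, v`, and `τ = ⌊2 · ord(u − v)⌋ = 2`. -/
theorem stmt18 {k L : Type*} [Field k] [IsAlgClosed k] [CharZero k]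
    [Field L] [IsAlgClosed L] [CharZero L]
    (φ : Polynomial k →+* L) (hφ : Function.Injective φ)
    (C₁ F₂ : Polynomial (Polynomial k))
    (p : ℕ → Polynomial (Polynomial k)) (hdeg : ∀ i, (p i).natDegree ≤ 2)
    (hp0 : p 0 = C Polynomial.X * X ^ 2) (hp1 : p 1 = X * C₁) (hp2 : p 2 = F₂)
    (hx : ¬ (X ∣ (C₁ ^ 2 - 4 * F₂ * C Polynomial.X)))
    (u v : HahnSeries ℚ L) (hu : HasConst u 0) (hv : HasConst v 0)
    (c : HahnSeries ℚ L)
    (hsplit : (fam 2 p).map (Phi φ) = C c * ((X - C u) * (X - C v)))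
    (hΔ : rootsSep ![u, v] ≠ 0) :
    (u - v).order = 1 ∧ ⌊(2 : ℚ) * (u - v).order⌋ = 2 := by
  have huv : u - v ≠ 0 := by
    intro h
    apply hΔ
    unfold rootsSep
    apply Finset.prod_eq_zero (i := ((0 : Fin 2), (1 : Fin 2)))
    · simp
    · simpa using h
  set P : ℕ → PowerSeries (Polynomial k) := fun j => PowerSeries.mk fun i => (p i).coeff j with hP
  have hfam : ∀ j < 3, (fam 2 p).coeff j = P j := by
    intro j hj
    unfold fam
    rw [Polynomial.finsetSum_coeff]
    simp only [Polynomial.coeff_C_mul_X_pow]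
    rw [Finset.sum_ite_eq]
    simp [hj, hP]
  have hR : C c * ((X - C u) * (X - C v)) =
      C c * X ^ 2 + C (-(c * (u + v))) * X ^ 1 + C (c * (u * v)) * X ^ 0 := by
    simp only [map_neg, map_mul, map_add]
    ring
  rw [hR] at hsplit
  have e : ∀ j < 3, Phi φ (P j) = (C c * X ^ 2 + C (-(c * (u + v))) * X ^ 1 +
      C (c * (u * v)) * X ^ 0 : Polynomial (HahnSeries ℚ L)).coeff j := by
    intro j hj
    rw [← hsplit, Polynomial.coeff_map, hfam j hj]
  have e0 : Phi φ (P 0) = c * (u * v) := by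
    rw [e 0 (by norm_num)]
    simp only [Polynomial.coeff_add, Polynomial.coeff_C_mul_X_pow]
    norm_num
  have e1 : Phi φ (P 1) = -(c * (u + v)) := by
    rw [e 1 (by norm_num)]
    simp only [Polynomial.coeff_add, Polynomial.coeff_C_mul_X_pow]
    norm_num
  have e2 : Phi φ (P 2) = c := by
    rw [e 2 (by norm_num)]
    simp only [Polynomial.coeff_add, Polynomial.coeff_C_mul_X_pow]
    norm_num
  have hD : Phi φ (P 1 ^ 2 - 4 * P 2 * P 0) = c ^ 2 * (u - v) ^ 2 := by
    rw [map_sub, map_mul, map_mul, map_pow, e0, e1, e2, map_ofNat]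
    ring
  obtain ⟨B, hB⟩ : (PowerSeries.X : PowerSeries (Polynomial k)) ∣ P 1 := by
    rw [PowerSeries.X_dvd_iff]
    simp [hP, hp0, ← PowerSeries.coeff_zero_eq_constantCoeff_apply]
  obtain ⟨E, hE⟩ : (PowerSeries.X : PowerSeries (Polynomial k)) ^ 2 ∣ P 0 := by
    rw [PowerSeries.X_pow_dvd_iff]
    intro m hm
    interval_cases m <;> simp [hP, hp0, hp1]
  have hB0 : PowerSeries.constantCoeff B = C₁.coeff 0 := by
    have h1 : PowerSeries.coeff 1 (P 1) = C₁.coeff 0 := by simp [hP, hp1]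
    rw [hB, show (1 : ℕ) = 0 + 1 from rfl, PowerSeries.coeff_succ_X_mul] at h1
    simpa using h1
  have hE0 : PowerSeries.constantCoeff E = F₂.coeff 0 := by
    have h1 : PowerSeries.coeff 2 (P 0) = F₂.coeff 0 := by simp [hP, hp2]
    rw [hE, show (2 : ℕ) = 0 + 2 from rfl, PowerSeries.coeff_X_pow_mul] at h1
    simpa using h1
  have hA0 : PowerSeries.constantCoeff (P 2) = (Polynomial.X : Polynomial k) := by
    simp [hP, hp0, ← PowerSeries.coeff_zero_eq_constantCoeff_apply]
  set G := B ^ 2 - 4 * P 2 * E with hG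
  have hDG : P 1 ^ 2 - 4 * P 2 * P 0 = PowerSeries.X ^ 2 * G := by
    rw [hB, hE, hG]; ring
  have hG0 : PowerSeries.constantCoeff G ≠ 0 := by
    intro h
    apply hx
    rw [Polynomial.X_dvd_iff]
    rw [hG, map_sub, map_mul, map_mul, map_pow, hB0, hE0, hA0, map_ofNat] at h
    rw [← h]
    simp only [Polynomial.coeff_zero_eq_eval_zero, Polynomial.eval_sub, Polynomial.eval_mul,
      Polynomial.eval_pow, Polynomial.eval_C, Polynomial.eval_ofNat]
    ring
  have oG : (Phi φ G).order = 0 := by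
    apply order_ofPS
    rw [← PowerSeries.coeff_zero_eq_constantCoeff_apply, PowerSeries.coeff_map,
      PowerSeries.coeff_zero_eq_constantCoeff_apply]
    exact (map_ne_zero_iff φ hφ).2 hG0
  have oc : (Phi φ (P 2)).order = 0 := by
    apply order_ofPS
    rw [← PowerSeries.coeff_zero_eq_constantCoeff_apply, PowerSeries.coeff_map,
      PowerSeries.coeff_zero_eq_constantCoeff_apply, hA0]
    exact (map_ne_zero_iff φ hφ).2 Polynomial.X_ne_zero
  rw [e2] at oc
  have hX : Phi φ PowerSeries.X = HahnSeries.single (1 : ℚ) (1 : L) := by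
    simp [Phi]
  rw [hDG, map_mul, map_pow, hX] at hD
  have hc : c ≠ 0 := by
    intro h0
    have : φ (Polynomial.X) = 0 := by
      have h1 := HahnSeries.ofPowerSeries_injective (Γ := ℚ) (R := L)
        (show HahnSeries.ofPowerSeries ℚ L (PowerSeries.map φ (P 2)) =
          HahnSeries.ofPowerSeries ℚ L 0 by rw [map_zero, ← h0, ← e2]; rfl)
      rw [← hA0, ← PowerSeries.coeff_zero_eq_constantCoeff_apply, ← PowerSeries.coeff_map, h1,
        map_zero]
    exact (map_ne_zero_iff φ hφ).2 Polynomial.X_ne_zero this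
  have hs : (HahnSeries.single (1 : ℚ) (1 : L)) ≠ 0 := by simp
  have hGne : Phi φ G ≠ 0 := by
    intro h
    rw [h, mul_zero] at hD
    exact mul_ne_zero (pow_ne_zero 2 hc) (pow_ne_zero 2 huv) hD.symm
  have ho := congrArg HahnSeries.order hD
  rw [HahnSeries.order_mul (pow_ne_zero 2 hs) hGne,
    HahnSeries.order_mul (pow_ne_zero 2 hc) (pow_ne_zero 2 huv), HahnSeries.order_pow,
    HahnSeries.order_pow, HahnSeries.order_pow, oG, oc, HahnSeries.order_single one_ne_zero] at ho
  have h1 : (u - v).order = 1 := by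
    simp only [nsmul_eq_mul] at ho
    push_cast at ho
    linarith
  refine ⟨h1, ?_⟩
  rw [h1]
  norm_num
end
end
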